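/- Let 𝒮 be a triangulated category admitting all small coproducts, equipped with a monoidal structure with unit 1 such that for every object E the endofunctor (−) ⊗ E is exact and preserves small coproducts. If the unit 1 belongs to ⟨A⟩̄_n for some object A and some n ≥ 0, then every object E of 𝒮 belongs to ⟨A ⊗ E⟩̄_n. -/

import Mathlib

/-!
An exact, coproduct-preserving endofunctor `F` maps `⟨G⟩̄ₙ` into `⟨F G⟩̄ₙ`
(`map_mem_bigLevel`, by induction on `n`, with the case `n = 1` in `map_mem_bigOne`).
Applied to `F = (-) ⊗ E` and `𝟙_ C ∈ ⟨A⟩̄ₙ` this gives `𝟙_ C ⊗ E ∈ ⟨A ⊗ E⟩̄ₙ`, and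
`⟨A ⊗ E⟩̄ₙ` is closed under retracts, in particular under the isomorphism `E ≅ 𝟙_ C ⊗ E`.
-/

open CategoryTheory Limits Pretriangulated MonoidalCategory

universe v u v₂ u₂

namespace Stmt

variable {C : Type u} [Category.{v} C]

/-- `X` is a retract (direct summand) of `Y`. -/
def IsRetract (X Y : C) : Prop := ∃ (i : X ⟶ Y) (p : Y ⟶ X), i ≫ p = 𝟙 X

section Big

variable [HasZeroObject C] [Preadditive C] [HasShift C ℤ]
  [∀ n : ℤ, (shiftFunctor C n).Additive] [Pretriangulated C]

/-- The objects of `⟨G⟩̄₁`: the smallest collection of objects containing `G` that is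
closed under shifts, arbitrary small coproducts, and direct summands (retracts). -/
def bigOne (G : C) : Set C :=
  ⋂₀ {S : Set C | G ∈ S ∧ (∀ X ∈ S, ∀ n : ℤ, (X⟦n⟧ : C) ∈ S) ∧
      (∀ (ι : Type v) (f : ι → C) (_ : HasCoproduct f), (∀ i, f i ∈ S) → (∐ f) ∈ S) ∧
      (∀ X Y : C, Y ∈ S → IsRetract X Y → X ∈ S)}

/-- The objects of `⟨G⟩̄ₙ`: `⟨G⟩̄₀` consists of the objects isomorphic to `0`;
`⟨G⟩̄₁` is `bigOne G`; for `n ≥ 2`, `⟨G⟩̄ₙ` consists of the direct summands of objects `E`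
fitting in a distinguished triangle `A ⟶ E ⟶ B ⟶ A⟦1⟧` with `A ∈ ⟨G⟩̄ₙ₋₁` and `B ∈ ⟨G⟩̄₁`. -/
def bigLevel (G : C) : ℕ → Set C
  | 0 => {X | IsZero X}
  | 1 => bigOne G
  | (n + 2) => {X | ∃ (E A B : C) (f : A ⟶ E) (g : E ⟶ B) (h : B ⟶ A⟦(1 : ℤ)⟧),
      (Triangle.mk f g h ∈ distTriang C) ∧ A ∈ bigLevel G (n + 1) ∧ B ∈ bigOne G ∧
      IsRetract X E}

end Big

lemma IsRetract.map {X Y : C} (h : IsRetract X Y) (F : C ⥤ C) :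
    IsRetract (F.obj X) (F.obj Y) := by
  obtain ⟨i, p, hip⟩ := h
  exact ⟨F.map i, F.map p, by rw [← F.map_comp, hip, F.map_id]⟩

lemma isRetract_of_iso {X Y : C} (e : X ≅ Y) : IsRetract X Y := ⟨e.hom, e.inv, e.hom_inv_id⟩

lemma IsRetract.trans {X Y Z : C} (h : IsRetract X Y) (h' : IsRetract Y Z) :
    IsRetract X Z := by
  obtain ⟨i, p, hip⟩ := h
  obtain ⟨j, q, hjq⟩ := h'
  exact ⟨i ≫ j, q ≫ p, by simp [reassoc_of% hjq, hip]⟩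

section Exact

variable [HasZeroObject C] [Preadditive C] [HasShift C ℤ]
  [∀ n : ℤ, (shiftFunctor C n).Additive] [Pretriangulated C]

lemma bigOne_of_isRetract {G X Y : C} (hY : Y ∈ bigOne G) (h : IsRetract X Y) :
    X ∈ bigOne G :=
  fun S hS => hS.2.2.2 X Y (hY S hS) h

lemma bigLevel_of_isRetract {G X Y : C} (n : ℕ) (hY : Y ∈ bigLevel G n) (h : IsRetract X Y) :
    X ∈ bigLevel G n := by
  match n, hY with
  | 0, hY =>
    obtain ⟨i, p, hip⟩ := h
    have hY : IsZero Y := hY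
    exact (IsZero.iff_id_eq_zero X).2 (by rw [← hip, hY.eq_of_tgt i 0, zero_comp])
  | 1, hY => exact bigOne_of_isRetract hY h
  | n + 2, hY =>
    obtain ⟨E, A, B, f, g, k, hT, hA, hB, hE⟩ := hY
    exact ⟨E, A, B, f, g, k, hT, hA, hB, h.trans hE⟩

/-- The preimage of `⟨F G⟩̄₁` under `F` contains `G` and has all the closure properties in the
definition of `⟨G⟩̄₁`, hence contains `⟨G⟩̄₁`. -/
lemma map_mem_bigOne (F : C ⥤ C) [F.CommShift ℤ]
    [∀ J : Type v, PreservesColimitsOfShape (Discrete J) F] {G X : C} (hX : X ∈ bigOne G) :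
    F.obj X ∈ bigOne (F.obj G) := by
  refine hX {Y | F.obj Y ∈ bigOne (F.obj G)} ⟨fun S hS => hS.1, ?_, ?_, ?_⟩
  · intro Y hY n
    exact bigOne_of_isRetract (fun S hS => hS.2.1 _ (hY S hS) n)
      (isRetract_of_iso ((F.commShiftIso n).app Y))
  · intro ι f _ hf
    -- `F` carries the coproduct cocone of `f` to a coproduct cocone of `F ∘ f`.
    have : HasCoproduct fun i => F.obj (f i) :=
      ⟨⟨_, isColimitCofanMkObjOfIsColimit F f _ (coproductIsCoproduct f)⟩⟩
    exact bigOne_of_isRetract (fun S hS => hS.2.2.1 ι _ this fun i => hf i S hS)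
      (isRetract_of_iso (PreservesCoproduct.iso F f))
  · intro Y Z hZ h
    exact bigOne_of_isRetract hZ (h.map F)

/-- An exact, coproduct-preserving endofunctor `F` maps `⟨G⟩̄ₙ` into `⟨F G⟩̄ₙ`. -/
lemma map_mem_bigLevel (F : C ⥤ C) [F.CommShift ℤ] [F.IsTriangulated]
    [∀ J : Type v, PreservesColimitsOfShape (Discrete J) F] {G : C} (n : ℕ) :
    ∀ {X : C}, X ∈ bigLevel G n → F.obj X ∈ bigLevel (F.obj G) n := by
  induction n with
  | zero => exact fun hX => F.map_isZero hX
  | succ n ih =>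
    intro X hX
    cases n with
    | zero => exact map_mem_bigOne F hX
    | succ n =>
      obtain ⟨E, A, B, f, g, k, hT, hA, hB, hE⟩ := hX
      exact ⟨F.obj E, F.obj A, F.obj B, _, _, _, F.map_distinguished _ hT, ih hA,
        map_mem_bigOne F hB, hE.map F⟩

end Exact

/--
in a triangulated category with all small coproducts, equipped with a
monoidal structure with unit `𝟙_ C` such that for every object `E` the endofunctor
`(-) ⊗ E` is exact and preserves small coproducts: if `𝟙_ C ∈ ⟨A⟩̄ₙ` for some object `A`
and some `n ≥ 0`, then every object `E` belongs to `⟨A ⊗ E⟩̄ₙ`.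
-/
theorem statement4 [HasZeroObject C] [Preadditive C] [HasShift C ℤ]
    [∀ n : ℤ, (shiftFunctor C n).Additive] [Pretriangulated C]
    [HasCoproducts.{v} C] [MonoidalCategory C]
    [∀ X : C, (tensorRight X).CommShift ℤ] [∀ X : C, (tensorRight X).IsTriangulated]
    [∀ (X : C) (J : Type v), PreservesColimitsOfShape (Discrete J) (tensorRight X)]
    (A : C) (n : ℕ) (h1 : (𝟙_ C) ∈ bigLevel A n) (E : C) :
    E ∈ bigLevel (A ⊗ E) n := by
  -- `E ≅ 𝟙_ C ⊗ E`, the image of the unit under `(-) ⊗ E`.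
  exact bigLevel_of_isRetract n (map_mem_bigLevel (tensorRight E) n h1)
    (isRetract_of_iso (λ_ E).symm)

end Stmt
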